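/- Let d ≥ 2 be an integer, let μ be the normalized Haar probability measure on U(d), and let Γ(X) = Σ_{i=1}^r K_i X K_iᴴ be a Kraus channel on d×d matrices (so Σ_i K_iᴴ K_i = I). Set q = (Σ_{i=1}^r |tr(K_i)|² − 1)/(d² − 1). Then for every d×d complex matrix X, ∫_{U(d)} Uᴴ Γ(U X Uᴴ) U dμ(U) = q·X + (1−q)·(tr(X)/d)·I. (Haar twirling of a quantum channel yields a depolarizing channel whose parameter is determined by the entanglement fidelity.) -/

import Mathlib

open MeasureTheory Matrix

attribute [local instance] Matrix.normedAddCommGroup Matrix.normedSpace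

noncomputable instance {n : Type*} [Fintype n] [DecidableEq n] :
    MeasurableSpace (Matrix.unitaryGroup n ℂ) := borel _

instance {n : Type*} [Fintype n] [DecidableEq n] :
    BorelSpace (Matrix.unitaryGroup n ℂ) := ⟨rfl⟩

lemma tensor_form {d : ℕ} (hd : 2 ≤ d) (t : Fin d → Fin d → Fin d → Fin d → ℂ)
    (hD : ∀ v : Fin d → ℂ, (∀ i, v i * star (v i) = 1) → ∀ i j k l,
      v i * star (v j) * t i j k l = v k * star (v l) * t i j k l)
    (hP : ∀ σ : Equiv.Perm (Fin d), ∀ i j k l, t (σ i) (σ j) (σ k) (σ l) = t i j k l) :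
    ∃ c β γ : ℂ, ∀ i j k l, t i j k l =
      c * (if i = k ∧ j = l then 1 else 0) + β * (if i = j ∧ k = l then 1 else 0)
       + γ * (if i = j ∧ k = l ∧ i = k then 1 else 0) := by
  have htr : ∀ i j a b : Fin d, i ≠ j → a ≠ b → ∃ σ : Equiv.Perm (Fin d), σ a = i ∧ σ b = j := by
    intro i j a b hij hab
    refine ⟨Equiv.swap (Equiv.swap a i b) j * Equiv.swap a i, ?_, ?_⟩
    · simp only [Equiv.Perm.mul_apply, Equiv.swap_apply_left]
      rw [Equiv.swap_apply_of_ne_of_ne _ hij]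
      intro h
      have h2 : Equiv.swap a i a = Equiv.swap a i b := by rw [Equiv.swap_apply_left]; exact h
      exact hab ((Equiv.swap a i).injective h2)
    · simp
  have hD2 : ∀ m i j k l : Fin d, t i j k l ≠ 0 →
      (if i = m then Complex.I else 1) * star (if j = m then Complex.I else 1) =
      (if k = m then Complex.I else 1) * star (if l = m then Complex.I else 1) := by
    intro m i j k l h
    have := hD (fun i => if i = m then Complex.I else 1) (by intro i; split_ifs <;> simp) i j k l
    exact mul_right_cancel₀ h this
  have n1 : (1 : ℂ) ≠ Complex.I := by intro h; simpa using congrArg Complex.re h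
  have n2 : Complex.I ≠ -Complex.I := by
    intro h; have := congrArg Complex.im h; norm_num at this
  have n3 : (1 : ℂ) ≠ -Complex.I := by intro h; simpa using congrArg Complex.re h
  have z1 : ∀ i j k l, i ≠ j → ¬ (i = k ∧ j = l) → t i j k l = 0 := by
    intro i j k l hij hn
    by_contra h
    have a := hD2 i i j k l h
    have b := hD2 j i j k l h
    rw [if_pos rfl, if_neg (Ne.symm hij)] at a
    rw [if_pos rfl, if_neg hij] at b
    by_cases h1 : k = i
    · subst h1
      by_cases h2 : l = j
      · exact hn ⟨rfl, h2.symm⟩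
      · rw [if_neg hij, if_neg h2] at b
        simp at b
        exact n3 b.symm
    · rw [if_neg h1] at a
      by_cases h2 : l = i
      · rw [if_pos h2] at a
        simp at a
        exact n2 a
      · rw [if_neg h2] at a
        simp at a
        exact n1 a.symm
  have z2 : ∀ i k l, k ≠ l → t i i k l = 0 := by
    intro i k l hkl
    by_contra h
    have a := hD2 k i i k l h
    rw [if_pos rfl, if_neg (Ne.symm hkl)] at a
    split_ifs at a
    · simp at a
      exact n1 a
    · simp at a
      exact n1 a
  let a : Fin d := ⟨0, by omega⟩
  let b : Fin d := ⟨1, by omega⟩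
  have hab : a ≠ b := by simp [a, b]
  have e1 : ∀ i j, i ≠ j → t i j i j = t a b a b := by
    intro i j hij
    obtain ⟨σ, rfl, rfl⟩ := htr i j a b hij hab
    exact hP σ _ _ _ _
  have e2 : ∀ i j, i ≠ j → t i i j j = t a a b b := by
    intro i j hij
    obtain ⟨σ, rfl, rfl⟩ := htr i j a b hij hab
    exact hP σ _ _ _ _
  have e3 : ∀ i, t i i i i = t a a a a := by
    intro i
    have := hP (Equiv.swap a i) a a a a
    simpa using this
  refine ⟨t a b a b, t a a b b, t a a a a - t a b a b - t a a b b, ?_⟩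
  intro i j k l
  by_cases hij : i = j
  · subst hij
    by_cases hkl : k = l
    · subst hkl
      by_cases hik : i = k
      · subst hik
        simp [e3 i]
      · simp [hik, e2 i k hik]
    · rw [z2 i k l hkl]
      have : ¬ (i = k ∧ i = l) := by rintro ⟨rfl, h⟩; exact hkl h
      simp [hkl, this]
  · by_cases h : i = k ∧ j = l
    · obtain ⟨rfl, rfl⟩ := h
      simp [hij, e1 i j hij]
    · simp [hij, h, z1 i j k l hij h]

lemma unitary_compact (d : ℕ) : CompactSpace (Matrix.unitaryGroup (Fin d) ℂ) := by
  have hcl : IsClosed (unitary (Matrix (Fin d) (Fin d) ℂ) : Set (Matrix (Fin d) (Fin d) ℂ)) :=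
    isClosed_unitary
  refine (isCompact_iff_compactSpace (s := (unitary (Matrix (Fin d) (Fin d) ℂ) : Set (Matrix (Fin d) (Fin d) ℂ)))).1 ?_
  apply Metric.isCompact_of_isClosed_isBounded
  · exact hcl
  · refine (Metric.isBounded_closedBall (x := (0 : Matrix (Fin d) (Fin d) ℂ)) (r := 1)).subset ?_
    intro U hU
    rw [mem_closedBall_zero_iff, Matrix.norm_le_iff zero_le_one]
    intro i j
    exact entry_norm_bound_of_unitary hU i j

lemma haar_right (d : ℕ) (μ : Measure (Matrix.unitaryGroup (Fin d) ℂ))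
    [μ.IsHaarMeasure] [IsProbabilityMeasure μ] : μ.IsMulRightInvariant := by
  have := unitary_compact d
  refine ⟨fun g => ?_⟩
  have : IsProbabilityMeasure (μ.map (· * g)) :=
    Measure.isProbabilityMeasure_map (by fun_prop)
  exact Measure.isHaarMeasure_eq_of_isProbabilityMeasure _ _

lemma commutant {d : ℕ} (hd : 2 ≤ d)
    (Φ : Matrix (Fin d) (Fin d) ℂ →ₗ[ℂ] Matrix (Fin d) (Fin d) ℂ)
    (h : ∀ V ∈ Matrix.unitaryGroup (Fin d) ℂ, ∀ X, Φ (V * X * Vᴴ) = V * Φ X * Vᴴ) :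
    ∃ a b : ℂ, ∀ X, Φ X = a • X + (b * X.trace) • (1 : Matrix (Fin d) (Fin d) ℂ) := by
  obtain ⟨c, β, γ, ht⟩ := tensor_form hd (fun i j k l => Φ (Matrix.single i j 1) k l) (by
    intro v hv i j k l
    have hV : Matrix.diagonal v ∈ Matrix.unitaryGroup (Fin d) ℂ := by
      rw [Matrix.mem_unitaryGroup_iff, star_eq_conjTranspose, diagonal_conjTranspose,
        diagonal_mul_diagonal, ← diagonal_one]
      congr 1
      funext i
      exact hv i
    have h1 := h _ hV (Matrix.single i j 1)
    have h2 : Matrix.diagonal v * Matrix.single i j 1 * (Matrix.diagonal v)ᴴ =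
        (v i * star (v j)) • Matrix.single i j (1 : ℂ) := by
      rw [diagonal_conjTranspose]
      ext a b
      rw [mul_diagonal, diagonal_mul]
      simp only [Matrix.smul_apply, single_apply, Pi.star_apply, smul_eq_mul]
      split_ifs with hh
      · obtain ⟨rfl, rfl⟩ := hh
        ring
      · ring
    rw [h2, map_smul] at h1
    have h3 := Matrix.ext_iff.mpr h1 k l
    rw [diagonal_conjTranspose, mul_diagonal, diagonal_mul] at h3
    simp only [Matrix.smul_apply, Pi.star_apply, smul_eq_mul] at h3
    rw [h3]
    ring) (by
    intro σ i j k l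
    have hc : ((σ⁻¹).permMatrix ℂ)ᴴ = σ.permMatrix ℂ := by
      rw [conjTranspose_permMatrix, inv_inv]
    have hV : (σ⁻¹).permMatrix ℂ ∈ Matrix.unitaryGroup (Fin d) ℂ := by
      rw [Matrix.mem_unitaryGroup_iff, star_eq_conjTranspose, hc, ← permMatrix_mul]
      simp
    have hconj : ∀ X : Matrix (Fin d) (Fin d) ℂ,
        (σ⁻¹).permMatrix ℂ * X * ((σ⁻¹).permMatrix ℂ)ᴴ = X.submatrix σ.symm σ.symm := by
      intro X
      rw [hc, Equiv.Perm.permMatrix, Equiv.Perm.permMatrix, PEquiv.toMatrix_toPEquiv_mul,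
        PEquiv.mul_toMatrix_toPEquiv]
      ext a b
      simp
    have h1 := h _ hV (Matrix.single i j 1)
    rw [hconj, hconj] at h1
    have h2 : (Matrix.single i j (1 : ℂ)).submatrix σ.symm σ.symm = Matrix.single (σ i) (σ j) 1 := by
      ext a b
      simp only [submatrix_apply, single_apply, Equiv.eq_symm_apply]
    rw [h2] at h1
    have h3 := Matrix.ext_iff.mpr h1 (σ k) (σ l)
    simpa using h3)
  have hform : ∀ X, Φ X = c • X + (β * X.trace) • (1 : Matrix (Fin d) (Fin d) ℂ)
      + γ • Matrix.diagonal (fun i => X i i) := by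
    intro X
    ext k l
    conv_lhs => rw [Matrix.matrix_eq_sum_single X]
    have hs : ∀ i j, Matrix.single i j (X i j) = X i j • Matrix.single i j (1 : ℂ) := by
      intro i j; rw [smul_single]; simp
    simp only [hs, map_sum, map_smul, Matrix.sum_apply, Matrix.smul_apply, ht, Matrix.add_apply, smul_eq_mul]
    simp only [mul_add, Finset.sum_add_distrib]
    congr 1
    · congr 1
      · simp [ite_and, mul_comm]
      · by_cases hkl : k = l
        · subst hkl
          simp [Matrix.trace, Finset.mul_sum, mul_comm]
        · simp [hkl]
    · by_cases hkl : k = l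
      · subst hkl
        simp [ite_and, mul_comm]
      · simp [hkl]
  have hγ : γ = 0 := by
    let a : Fin d := ⟨0, by omega⟩
    let b : Fin d := ⟨1, by omega⟩
    have hab : a ≠ b := by simp [a, b]
    let v : Fin d → ℂ := fun i => if i = a then 3/5 else if i = b then 4/5 else 0
    have hvs : star v = v := by
      funext i
      simp only [v, Pi.star_apply]
      split_ifs <;> simp
    have hvv : v ⬝ᵥ v = 1 := by
      have : ∀ i, v i * v i = (if i = a then 9/25 else 0) + (if i = b then 16/25 else 0) := by
        intro i
        by_cases h1 : i = a
        · simp [v, h1, hab]; norm_num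
        · by_cases h2 : i = b
          · simp [v, h2, hab.symm]; norm_num
          · simp [v, h1, h2]
      simp only [dotProduct, this, Finset.sum_add_distrib, Finset.sum_ite_eq', Finset.mem_univ,
        if_true]
      norm_num
    let P := vecMulVec v v
    have hP : P * P = P := by
      simp only [P, vecMulVec_mul_vecMulVec, hvv, one_smul]
    have hPs : Pᴴ = P := by
      simp only [P, conjTranspose_vecMulVec, hvs]
    let V : Matrix (Fin d) (Fin d) ℂ := 1 - (2 : ℂ) • P
    have hVs : Vᴴ = V := by
      simp [V, conjTranspose_sub, conjTranspose_smul, hPs]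
    have hV : V ∈ Matrix.unitaryGroup (Fin d) ℂ := by
      rw [Matrix.mem_unitaryGroup_iff, star_eq_conjTranspose, hVs]
      simp only [V, sub_mul, mul_sub, one_mul, mul_one, smul_mul_assoc, mul_smul_comm, hP]
      module
    have h1 := h V hV (Matrix.single a a 1)
    have hd1 : Matrix.diagonal (fun i => (Matrix.single a a (1:ℂ)) i i) = Matrix.single a a 1 := by
      ext i j
      simp only [diagonal_apply, single_apply]
      grind
    have htr : (V * Matrix.single a a (1:ℂ) * Vᴴ).trace = (Matrix.single a a (1:ℂ)).trace := by
      have : Vᴴ * V = 1 := by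
        rw [← star_eq_conjTranspose]; exact (Matrix.mem_unitaryGroup_iff').1 hV
      rw [Matrix.trace_mul_comm, ← mul_assoc, this, one_mul]
    rw [hform, hform, hd1, htr] at h1
    have hVV : V * Vᴴ = 1 := by
      rw [← star_eq_conjTranspose]; exact (Matrix.mem_unitaryGroup_iff).1 hV
    simp only [mul_add, add_mul, mul_smul_comm, smul_mul_assoc, mul_one, hVV] at h1
    have h1' := add_left_cancel h1
    have h2 := Matrix.ext_iff.mpr h1' a b
    have h3 : (V * Matrix.single a a (1:ℂ) * Vᴴ) a b = V a a * V a b := by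
      rw [hVs, mul_assoc, Matrix.mul_apply, Finset.sum_eq_single a]
      · simp
      · intro i _ hi
        simp [hi]
      · simp
    rw [Matrix.smul_apply, Matrix.smul_apply, h3, diagonal_apply_ne _ hab] at h2
    have h4 : V a a = 7/25 := by
      simp [V, P, vecMulVec_apply, v]; norm_num
    have h5 : V a b = -24/25 := by
      simp [V, P, vecMulVec_apply, v, hab, hab.symm]; norm_num
    rw [h4, h5] at h2
    simp at h2
    exact h2
  refine ⟨c, β, fun X => ?_⟩
  rw [hform, hγ, zero_smul, add_zero]

/-- The integrand of the twirl, as a linear map in `X`. -/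
noncomputable def twirlMap {d r : ℕ} (K : Fin r → Matrix (Fin d) (Fin d) ℂ)
    (U : Matrix (Fin d) (Fin d) ℂ) (X : Matrix (Fin d) (Fin d) ℂ) : Matrix (Fin d) (Fin d) ℂ :=
  Uᴴ * (∑ i, K i * (U * X * Uᴴ) * (K i)ᴴ) * U

/-- Integrability with respect to the topology coming from the norm. -/
abbrev NormIntegrable {α E : Type*} [MeasurableSpace α] [NormedAddCommGroup E] (f : α → E)
    (μ : Measure α) : Prop := Integrable f μ

lemma normIntegrable_of_continuous {α E : Type*} [MeasurableSpace α] [TopologicalSpace α]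
    [CompactSpace α] [T2Space α] [BorelSpace α] [NormedAddCommGroup E] [SecondCountableTopology E] (f : α → E)
    (hf : Continuous f) (μ : Measure α) [IsProbabilityMeasure μ] : NormIntegrable f μ := by
  rw [NormIntegrable, ← integrableOn_univ]
  exact hf.continuousOn.integrableOn_compact isCompact_univ

lemma twirl_integrable {d r : ℕ} (μ : Measure (Matrix.unitaryGroup (Fin d) ℂ))
    [IsProbabilityMeasure μ] (K : Fin r → Matrix (Fin d) (Fin d) ℂ)
    (X : Matrix (Fin d) (Fin d) ℂ) :
    NormIntegrable (fun U : Matrix.unitaryGroup (Fin d) ℂ => twirlMap K U X) μ := by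
  have := unitary_compact d
  have hc : Continuous (fun U : Matrix.unitaryGroup (Fin d) ℂ => twirlMap K U X) := by
    unfold twirlMap
    fun_prop
  exact normIntegrable_of_continuous _ hc μ

/-- The twirled channel as a linear map. -/
noncomputable def twirl {d r : ℕ} (μ : Measure (Matrix.unitaryGroup (Fin d) ℂ))
    [IsProbabilityMeasure μ] (K : Fin r → Matrix (Fin d) (Fin d) ℂ) :
    Matrix (Fin d) (Fin d) ℂ →ₗ[ℂ] Matrix (Fin d) (Fin d) ℂ where
  toFun X := ∫ U, twirlMap K U X ∂μ
  map_add' X Y := by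
    rw [← integral_add (twirl_integrable μ K X) (twirl_integrable μ K Y)]
    congr 1
    funext U
    simp only [twirlMap, mul_add, add_mul, Finset.sum_add_distrib]
  map_smul' c X := by
    rw [RingHom.id_apply, ← integral_smul]
    congr 1
    funext U
    simp only [twirlMap, mul_smul_comm, smul_mul_assoc, ← Finset.smul_sum]

lemma twirl_comp {d r : ℕ} (μ : Measure (Matrix.unitaryGroup (Fin d) ℂ))
    [IsProbabilityMeasure μ] (K : Fin r → Matrix (Fin d) (Fin d) ℂ)
    (X : Matrix (Fin d) (Fin d) ℂ) {E : Type*} [NormedAddCommGroup E] [NormedSpace ℂ E]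
    [CompleteSpace E] (L : Matrix (Fin d) (Fin d) ℂ →ₗ[ℂ] E) :
    L (twirl μ K X) = ∫ U : Matrix.unitaryGroup (Fin d) ℂ, L (twirlMap K U X) ∂μ := by
  exact (ContinuousLinearMap.integral_comp_comm (LinearMap.toContinuousLinearMap L)
    (twirl_integrable μ K X)).symm

lemma twirl_cov {d r : ℕ} (μ : Measure (Matrix.unitaryGroup (Fin d) ℂ))
    [μ.IsHaarMeasure] [IsProbabilityMeasure μ] (K : Fin r → Matrix (Fin d) (Fin d) ℂ)
    (V : Matrix (Fin d) (Fin d) ℂ) (hV : V ∈ Matrix.unitaryGroup (Fin d) ℂ)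
    (X : Matrix (Fin d) (Fin d) ℂ) :
    twirl μ K (V * X * Vᴴ) = V * twirl μ K X * Vᴴ := by
  have := haar_right d μ
  have hVV : V * Vᴴ = 1 := by
    rw [← star_eq_conjTranspose]; exact (Matrix.mem_unitaryGroup_iff).1 hV
  have h1 := twirl_comp μ K X
    ((LinearMap.mulRight ℂ Vᴴ) ∘ₗ (LinearMap.mulLeft ℂ V))
  simp only [LinearMap.comp_apply, LinearMap.mulRight_apply, LinearMap.mulLeft_apply] at h1
  rw [h1, ← integral_mul_right_eq_self _ (⟨V, hV⟩ : Matrix.unitaryGroup (Fin d) ℂ)]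
  change ∫ U, twirlMap K U _ ∂μ = _
  congr 1
  funext U
  change _ = V * twirlMap K ((U : Matrix (Fin d) (Fin d) ℂ) * V) X * Vᴴ
  simp only [twirlMap, conjTranspose_mul, mul_assoc, hVV, mul_one]
  rw [← mul_assoc V Vᴴ, hVV, one_mul]

lemma twirl_trace {d r : ℕ} (μ : Measure (Matrix.unitaryGroup (Fin d) ℂ))
    [IsProbabilityMeasure μ] (K : Fin r → Matrix (Fin d) (Fin d) ℂ)
    (hK : ∑ i, (K i)ᴴ * K i = 1) (X : Matrix (Fin d) (Fin d) ℂ) :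
    (twirl μ K X).trace = X.trace := by
  have h1 := twirl_comp μ K X (Matrix.traceLinearMap (Fin d) ℂ ℂ)
  simp only [Matrix.traceLinearMap_apply] at h1
  rw [h1]
  have h2 : ∀ U : Matrix.unitaryGroup (Fin d) ℂ, (twirlMap K U X).trace = X.trace := by
    intro U
    have hU1 : (U : Matrix (Fin d) (Fin d) ℂ) * (U : Matrix (Fin d) (Fin d) ℂ)ᴴ = 1 := by
      rw [← star_eq_conjTranspose]; exact (Matrix.mem_unitaryGroup_iff).1 U.2
    have hU2 : (U : Matrix (Fin d) (Fin d) ℂ)ᴴ * (U : Matrix (Fin d) (Fin d) ℂ) = 1 := by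
      rw [← star_eq_conjTranspose]; exact (Matrix.mem_unitaryGroup_iff').1 U.2
    rw [twirlMap, Matrix.trace_mul_comm, ← mul_assoc, hU1, one_mul, Matrix.trace_sum]
    have : ∀ i, (K i * ((U : Matrix (Fin d) (Fin d) ℂ) * X *
        (U : Matrix (Fin d) (Fin d) ℂ)ᴴ) * (K i)ᴴ).trace = ((K i)ᴴ * K i *
        ((U : Matrix (Fin d) (Fin d) ℂ) * X * (U : Matrix (Fin d) (Fin d) ℂ)ᴴ)).trace := by
      intro i
      rw [Matrix.trace_mul_comm, mul_assoc ((K i)ᴴ)]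
    simp only [this]
    rw [← Matrix.trace_sum, ← Finset.sum_mul, hK, one_mul, Matrix.trace_mul_comm, ← mul_assoc,
      hU2, one_mul]
  simp only [h2]
  simp

lemma conj_single_apply {d : ℕ} (A B : Matrix (Fin d) (Fin d) ℂ) (k l : Fin d) :
    (A * Matrix.single k l (1:ℂ) * B) k l = A k k * B l l := by
  rw [mul_assoc, Matrix.mul_apply, Finset.sum_eq_single k]
  · simp
  · intro i _ hi
    simp [hi]
  · simp

lemma twirl_supertrace {d r : ℕ} (μ : Measure (Matrix.unitaryGroup (Fin d) ℂ))
    [IsProbabilityMeasure μ] (K : Fin r → Matrix (Fin d) (Fin d) ℂ) :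
    ∑ k, ∑ l, (twirl μ K (Matrix.single k l 1)) k l = ((∑ i, ‖(K i).trace‖ ^ 2 : ℝ) : ℂ) := by
  have h1 : ∀ k l, (twirl μ K (Matrix.single k l 1)) k l =
      ∫ U : Matrix.unitaryGroup (Fin d) ℂ, (twirlMap K U (Matrix.single k l 1)) k l ∂μ :=
    fun k l => twirl_comp μ K (Matrix.single k l 1) (Matrix.entryLinearMap ℂ ℂ k l)
  have hintg : ∀ k l, Integrable (fun U : Matrix.unitaryGroup (Fin d) ℂ =>
      (twirlMap K U (Matrix.single k l 1)) k l) μ := fun k l =>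
    (LinearMap.toContinuousLinearMap (Matrix.entryLinearMap ℂ ℂ k l)).integrable_comp
      (twirl_integrable μ K (Matrix.single k l 1))
  simp only [h1]
  have h2 : ∀ k, ∑ l, ∫ U : Matrix.unitaryGroup (Fin d) ℂ,
      (twirlMap K U (Matrix.single k l 1)) k l ∂μ =
      ∫ U : Matrix.unitaryGroup (Fin d) ℂ, ∑ l, (twirlMap K U (Matrix.single k l 1)) k l ∂μ :=
    fun k => (integral_finsetSum _ (fun l _ => hintg k l)).symm
  simp only [h2]
  rw [← integral_finsetSum _ (fun k _ => integrable_finsetSum _ (fun l _ => hintg k l))]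
  have h3 : ∀ U : Matrix.unitaryGroup (Fin d) ℂ,
      ∑ k, ∑ l, (twirlMap K U (Matrix.single k l 1)) k l =
        ((∑ i, ‖(K i).trace‖ ^ 2 : ℝ) : ℂ) := by
    intro U
    have hU1 : (U : Matrix (Fin d) (Fin d) ℂ) * (U : Matrix (Fin d) (Fin d) ℂ)ᴴ = 1 := by
      rw [← star_eq_conjTranspose]; exact (Matrix.mem_unitaryGroup_iff).1 U.2
    have h4 : ∀ k l, (twirlMap K U (Matrix.single k l 1)) k l = ∑ i,
        ((U : Matrix (Fin d) (Fin d) ℂ)ᴴ * K i * (U : Matrix (Fin d) (Fin d) ℂ)) k k *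
        ((U : Matrix (Fin d) (Fin d) ℂ)ᴴ * (K i)ᴴ * (U : Matrix (Fin d) (Fin d) ℂ)) l l := by
      intro k l
      rw [twirlMap, Finset.mul_sum, Finset.sum_mul, Matrix.sum_apply]
      refine Finset.sum_congr rfl fun i _ => ?_
      rw [← conj_single_apply]
      simp only [mul_assoc]
    have h5 : ∀ A : Matrix (Fin d) (Fin d) ℂ, ∑ k, ((U : Matrix (Fin d) (Fin d) ℂ)ᴴ * A *
        (U : Matrix (Fin d) (Fin d) ℂ)) k k = A.trace := by
      intro A
      change Matrix.trace _ = _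
      rw [Matrix.trace_mul_comm, ← mul_assoc, hU1, one_mul]
    have h6 : ∀ k, ∑ l, (twirlMap K U (Matrix.single k l 1)) k l = ∑ i,
        ((U : Matrix (Fin d) (Fin d) ℂ)ᴴ * K i * (U : Matrix (Fin d) (Fin d) ℂ)) k k *
          ((K i)ᴴ).trace := by
      intro k
      simp only [h4]
      rw [Finset.sum_comm]
      simp only [← Finset.mul_sum, h5]
    simp only [h6]
    rw [Finset.sum_comm]
    simp only [← Finset.sum_mul, h5, Matrix.trace_conjTranspose]
    push_cast
    refine Finset.sum_congr rfl fun i _ => ?_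
    exact RCLike.mul_conj _
  simp only [h3]
  simp

/-- **Haar twirling of a quantum channel yields a depolarizing channel.**
For a Kraus channel `Γ(X) = Σᵢ Kᵢ X Kᵢᴴ` with `Σᵢ Kᵢᴴ Kᵢ = I` and
`q = (Σᵢ |tr Kᵢ|² − 1)/(d² − 1)`:
`∫ Uᴴ Γ(U X Uᴴ) U dμ(U) = q·X + (1−q)·(tr X / d)·I`. -/
theorem haar_twirl_channel (d : ℕ) (hd : 2 ≤ d)
    (μ : Measure (Matrix.unitaryGroup (Fin d) ℂ))
    [μ.IsHaarMeasure] [IsProbabilityMeasure μ]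
    (r : ℕ) (K : Fin r → Matrix (Fin d) (Fin d) ℂ)
    (hK : ∑ i, (K i)ᴴ * K i = 1)
    (q : ℝ) (hq : q = ((∑ i, ‖(K i).trace‖ ^ 2) - 1) / ((d : ℝ) ^ 2 - 1)) :
    ∀ X : Matrix (Fin d) (Fin d) ℂ,
      (∫ U, (U : Matrix (Fin d) (Fin d) ℂ)ᴴ *
          (∑ i, K i * ((U : Matrix (Fin d) (Fin d) ℂ) * X *
            (U : Matrix (Fin d) (Fin d) ℂ)ᴴ) * (K i)ᴴ) *
          (U : Matrix (Fin d) (Fin d) ℂ) ∂μ)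
        = (q : ℂ) • X +
          ((1 : ℂ) - (q : ℂ)) • ((X.trace / (d : ℂ)) • (1 : Matrix (Fin d) (Fin d) ℂ)) := by
  intro X
  change twirl μ K X = _
  obtain ⟨a, b, hab⟩ := commutant hd (twirl μ K) (twirl_cov μ K)
  have hd0 : (d : ℂ) ≠ 0 := by
    have : d ≠ 0 := by omega
    exact_mod_cast this
  have hdr : ((d : ℝ) ^ 2 - 1) ≠ 0 := by
    have : (2 : ℝ) ≤ d := by exact_mod_cast hd
    nlinarith
  have e1 : a + b * d = 1 := by
    have h := twirl_trace μ K hK 1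
    rw [hab] at h
    simp only [Matrix.trace_add, Matrix.trace_smul, Matrix.trace_one, Fintype.card_fin,
      smul_eq_mul] at h
    apply mul_right_cancel₀ hd0
    linear_combination h
  have e2 : a * d ^ 2 + b * d = ((∑ i, ‖(K i).trace‖ ^ 2 : ℝ) : ℂ) := by
    rw [← twirl_supertrace μ K]
    have : ∀ k l : Fin d, (twirl μ K (Matrix.single k l 1)) k l =
        a + b * (if k = l then 1 else 0) := by
      intro k l
      rw [hab]
      by_cases hkl : k = l
      · subst hkl
        simp
      · simp [hkl]
    simp only [this, Finset.sum_add_distrib]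
    simp
    ring
  have hdc : ((d : ℂ) ^ 2 - 1) ≠ 0 := by exact_mod_cast hdr
  have ha : a = (q : ℂ) := by
    rw [hq]
    push_cast
    push_cast at e2
    rw [← e2, eq_div_iff hdc]
    linear_combination -e1
  have hb : b = (1 - (q : ℂ)) / d := by
    rw [← ha, eq_div_iff hd0]
    linear_combination e1
  rw [hab, ha, hb, smul_smul]
  congr 2
  ring
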